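/- Let K be a field and A a nontrivial commutative K-algebra that is finite-dimensional as a K-vector space. Then A is formally unramified over K (i.e. Ω_{A/K} = 0) if and only if the trace form of A over K is nondegenerate, if and only if every element of A is a root of some separable polynomial of K[X]. -/

import Mathlib

/-!
A finite-dimensional reduced `K`-algebra is the product of its residue fields `A ⧸ m`. An
unramified algebra is reduced with separable residue fields. The radical of the trace form
contains every nilpotent element, and the trace form of a product is the orthogonal sum of the
trace forms of its factors, so nondegeneracy of the trace form again says that `A` is reduced with
separable residue fields. An element of a product is a root of a separable polynomial as soon as
each of its components is, because separable polynomials over a field have separable common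
multiples. Finally, if `f(a) = 0` with `f` separable, then `f'(a)` is a unit and
`0 = d(f(a)) = f'(a) da`, so `da = 0`.
-/

open Polynomial

section Separable

theorem isUnit_aeval_derivative_of_separable {R A : Type*} [CommRing R] [CommRing A] [Algebra R A]
    {f : R[X]} {a : A} (hf : f.Separable) (ha : aeval a f = 0) :
    IsUnit (aeval a (derivative f)) := by
  obtain ⟨u, v, huv⟩ := hf
  have hva : aeval a v * aeval a (derivative f) = 1 := by
    simpa [ha] using congrArg (aeval a) huv
  exact .of_mul_eq_one_right _ hva

theorem derivation_eq_zero_of_separable {R A M : Type*} [CommRing R] [CommRing A] [Algebra R A]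
    [AddCommGroup M] [Module R M] [Module A M] (D : Derivation R A M)
    {f : R[X]} {a : A} (hf : f.Separable) (ha : aeval a f = 0) : D a = 0 := by
  have hD : aeval a (derivative f) • D a = 0 := by rw [← D.map_aeval, ha, map_zero]
  exact (isUnit_aeval_derivative_of_separable hf ha).smul_eq_zero.mp hD

theorem formallyUnramified_of_isSeparable (R A : Type*) [CommRing R] [CommRing A] [Algebra R A]
    [Algebra.IsSeparable R A] : Algebra.FormallyUnramified R A := by
  have hD (a : A) : KaehlerDifferential.D R A a = 0 :=
    derivation_eq_zero_of_separable _ (Algebra.IsSeparable.isSeparable R a) (minpoly.aeval R a)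
  have htop : (⊤ : Submodule A Ω[A⁄R]) = ⊥ := by
    rw [← KaehlerDifferential.span_range_derivation, Submodule.span_eq_bot]
    exact Set.forall_mem_range.mpr hD
  exact ⟨(Submodule.subsingleton_iff A).mp (subsingleton_of_bot_eq_top htop.symm)⟩

variable {K : Type*} [Field K]

theorem exists_separable_dvd_and_dvd {f g : K[X]} (hf : f.Separable) (hg : g.Separable) :
    ∃ h : K[X], h.Separable ∧ f ∣ h ∧ g ∣ h := by
  classical
  let := EuclideanDomain.gcdMonoid K[X]
  obtain ⟨f', g', hf', hg', hunit⟩ := extract_gcd f g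
  have hgcd : IsCoprime (gcd f g) g' := (hg' ▸ hg).isCoprime
  have hcoprime : IsCoprime f g' := hf' ▸ hgcd.mul_left ((gcd_isUnit_iff f' g').mp hunit)
  have hsep : g'.Separable := hg.of_dvd (Dvd.intro_left _ hg'.symm)
  refine ⟨f * g', hf.mul hsep hcoprime, dvd_mul_right f g', ?_⟩
  calc g = gcd f g * g' := hg'
    _ ∣ f * g' := mul_dvd_mul_right (gcd_dvd_left f g) g'

theorem exists_separable_forall_mem_dvd (s : Finset K[X]) (hs : ∀ f ∈ s, f.Separable) :
    ∃ g : K[X], g.Separable ∧ ∀ f ∈ s, f ∣ g := by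
  classical
  induction s using Finset.induction_on with
  | empty => exact ⟨1, separable_one, by simp⟩
  | insert f s _ ih =>
    rw [Finset.forall_mem_insert] at hs
    obtain ⟨g, hg, hsg⟩ := ih hs.2
    obtain ⟨h, hh, hfh, hgh⟩ := exists_separable_dvd_and_dvd hs.1 hg
    exact ⟨h, hh, (Finset.forall_mem_insert ..).mpr ⟨hfh, fun p hp ↦ (hsg p hp).trans hgh⟩⟩

theorem exists_separable_aeval_eq_zero_iff_isSeparable {A : Type*} [Ring A] [Algebra K A] {a : A} :
    (∃ f : K[X], f.Separable ∧ aeval a f = 0) ↔ IsSeparable K a :=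
  ⟨fun ⟨_, hf, ha⟩ ↦ hf.of_dvd (minpoly.dvd K a ha), fun ha ↦ ⟨_, ha, minpoly.aeval K a⟩⟩

theorem isSeparable_pi_iff {ι : Type*} [Finite ι] {A : ι → Type*} [∀ i, Ring (A i)]
    [∀ i, Algebra K (A i)] {a : ∀ i, A i} : IsSeparable K a ↔ ∀ i, IsSeparable K (a i) := by
  classical
  have := Fintype.ofFinite ι
  simp only [← exists_separable_aeval_eq_zero_iff_isSeparable, aeval_pi_apply, funext_iff,
    Pi.zero_apply]
  refine ⟨fun ⟨f, hf, ha⟩ i ↦ ⟨f, hf, ha i⟩, fun h ↦ ?_⟩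
  choose f hf ha using h
  obtain ⟨g, hg, hfg⟩ := exists_separable_forall_mem_dvd (Finset.univ.image f)
    (Finset.forall_mem_image.mpr fun i _ ↦ hf i)
  exact ⟨g, hg, fun i ↦ aeval_eq_zero_of_dvd_aeval_eq_zero
    (hfg _ (Finset.mem_image_of_mem f (Finset.mem_univ i))) (ha i)⟩

end Separable

section TraceForm

open Algebra

theorem traceForm_nondegenerate_iff_separatingLeft (R A : Type*) [CommRing R] [CommRing A]
    [Algebra R A] : (traceForm R A).Nondegenerate ↔ (traceForm R A).SeparatingLeft :=
  LinearMap.IsRefl.nondegenerate_iff_separatingLeft (traceForm_isSymm R).isRefl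

theorem isReduced_of_traceForm_nondegenerate {R A : Type*} [CommRing R] [IsReduced R] [CommRing A]
    [Algebra R A] (h : (traceForm R A).Nondegenerate) : IsReduced A where
  eq_zero x hx := h.1 x fun y ↦
    (isNilpotent_trace_of_isNilpotent ((Commute.all x y).isNilpotent_mul_right hx)).eq_zero

theorem traceForm_nondegenerate_iff_of_algEquiv {R A B : Type*} [CommRing R] [CommRing A]
    [CommRing B] [Algebra R A] [Algebra R B] (e : A ≃ₐ[R] B) :
    (traceForm R A).Nondegenerate ↔ (traceForm R B).Nondegenerate := by
  rw [← LinearMap.BilinForm.nondegenerate_congr_iff e.toLinearEquiv]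
  suffices h : LinearMap.BilinForm.congr e.toLinearEquiv (traceForm R A) = traceForm R B by rw [h]
  ext x y
  simp [traceForm_apply, ← trace_eq_of_algEquiv e]

variable {R ι : Type*} [CommRing R] [Finite ι] {A : ι → Type*} [∀ i, CommRing (A i)]
  [∀ i, Algebra R (A i)] [∀ i, Module.Free R (A i)] [∀ i, Module.Finite R (A i)]

theorem trace_pi_single [DecidableEq ι] (i : ι) (y : A i) :
    trace R (∀ i, A i) (Pi.single i y) = trace R (A i) y := by
  have h : lmul R (∀ i, A i) (Pi.single i y) =
      LinearMap.single R A i ∘ₗ (lmul R (A i) y ∘ₗ LinearMap.proj i) := by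
    refine LinearMap.ext fun x ↦ ?_
    simp [← Pi.single_mul_left]
  rw [trace_apply, h, LinearMap.trace_comp_comm', LinearMap.comp_assoc,
    LinearMap.proj_comp_single_same, LinearMap.comp_id, trace_apply]

theorem traceForm_pi_single_right [DecidableEq ι] (x : ∀ i, A i) (i : ι) (y : A i) :
    traceForm R (∀ i, A i) x (Pi.single i y) = traceForm R (A i) (x i) y := by
  rw [traceForm_apply, traceForm_apply, ← Pi.single_mul_right, trace_pi_single]

theorem traceForm_pi_nondegenerate_iff :
    (traceForm R (∀ i, A i)).Nondegenerate ↔ ∀ i, (traceForm R (A i)).Nondegenerate := by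
  classical
  simp only [traceForm_nondegenerate_iff_separatingLeft]
  refine ⟨fun h i x hx ↦ ?_, fun h x hx ↦ funext fun i ↦ h i _ fun y ↦ ?_⟩
  · have hsingle : Pi.single i x = 0 := h _ fun y ↦ by
      rw [traceForm_apply, mul_comm, ← traceForm_apply, traceForm_pi_single_right,
        traceForm_apply, mul_comm, ← traceForm_apply, hx]
    exact Pi.single_eq_zero_iff.mp hsingle
  · rw [← traceForm_pi_single_right, hx]

end TraceForm

section ResidueFields

variable (K A : Type*) [Field K] [CommRing A] [Algebra K A]

theorem isSeparable_of_forall_isSeparable_quotient [IsArtinianRing A] [IsReduced A]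
    (h : ∀ m : MaximalSpectrum A, Algebra.IsSeparable K (A ⧸ m.asIdeal)) :
    Algebra.IsSeparable K A := by
  let e := (IsArtinianRing.equivPi A).restrictScalars K
  exact ⟨fun a ↦ e.isSeparable_iff.mp (isSeparable_pi_iff.mpr fun m ↦ (h m).isSeparable _ (e a m))⟩

theorem isSeparable_quotient_of_formallyUnramified [Algebra.FormallyUnramified K A]
    [Algebra.EssFiniteType K A] (m : Ideal A) [m.IsMaximal] : Algebra.IsSeparable K (A ⧸ m) := by
  let := Ideal.Quotient.field m
  exact Algebra.FormallyUnramified.isSeparable K (A ⧸ m)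

variable [FiniteDimensional K A]

theorem traceForm_nondegenerate_iff_forall_isSeparable_quotient [IsReduced A] :
    (Algebra.traceForm K A).Nondegenerate ↔
      ∀ m : MaximalSpectrum A, Algebra.IsSeparable K (A ⧸ m.asIdeal) := by
  have := IsArtinianRing.of_finite K A
  rw [traceForm_nondegenerate_iff_of_algEquiv ((IsArtinianRing.equivPi A).restrictScalars K),
    traceForm_pi_nondegenerate_iff]
  refine forall_congr' fun m ↦ ?_
  let := Ideal.Quotient.field m.asIdeal
  exact (traceForm_nondegenerate_tfae K (A ⧸ m.asIdeal)).out 2 0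

theorem traceForm_nondegenerate_of_formallyUnramified [Algebra.FormallyUnramified K A] :
    (Algebra.traceForm K A).Nondegenerate := by
  have := Algebra.FormallyUnramified.isReduced_of_field K A
  exact (traceForm_nondegenerate_iff_forall_isSeparable_quotient K A).mpr
    fun m ↦ isSeparable_quotient_of_formallyUnramified K A m.asIdeal

theorem isSeparable_of_traceForm_nondegenerate (h : (Algebra.traceForm K A).Nondegenerate) :
    Algebra.IsSeparable K A := by
  have := isReduced_of_traceForm_nondegenerate h
  have := IsArtinianRing.of_finite K A
  exact isSeparable_of_forall_isSeparable_quotient K A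
    ((traceForm_nondegenerate_iff_forall_isSeparable_quotient K A).mp h)

end ResidueFields

/-- A nontrivial finite-dimensional commutative algebra `A` over a field `K` is
formally unramified (`Ω_{A/K} = 0`) iff its trace form is nondegenerate, iff every
element of `A` is a root of some separable polynomial of `K[X]`. -/
theorem stmt16 {K A : Type*} [Field K] [CommRing A] [Nontrivial A] [Algebra K A]
    [FiniteDimensional K A] :
    (Subsingleton (KaehlerDifferential K A) ↔ (Algebra.traceForm K A).Nondegenerate) ∧
    ((Algebra.traceForm K A).Nondegenerate ↔
      ∀ a : A, ∃ f : Polynomial K, f.Separable ∧ Polynomial.aeval a f = 0) := by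
  simp only [← Algebra.formallyUnramified_iff, exists_separable_aeval_eq_zero_iff_isSeparable,
    ← Algebra.isSeparable_def]
  have trace_of_unramified (_ : Algebra.FormallyUnramified K A) :
      (Algebra.traceForm K A).Nondegenerate :=
    traceForm_nondegenerate_of_formallyUnramified K A
  have separable_of_trace := isSeparable_of_traceForm_nondegenerate K A
  have unramified_of_separable (_ : Algebra.IsSeparable K A) : Algebra.FormallyUnramified K A :=
    formallyUnramified_of_isSeparable K A
  tauto
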